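/- Let m, n > 2 and let C be the set of all corner minors of M, so that I(C) = (x₁₁x_{ij} − x_{1j}x_{i1} : 2 ≤ i ≤ m, 2 ≤ j ≤ n) ⊆ S. Then I₂(M) ∩ H ∩ V = I(C) + x₁₁·I₂(M_{2,2}), where H and V are the ideals generated by the first-row and first-column variables, respectively. -/

import Mathlib

open MvPolynomial

/-- The Hilbert function `i ↦ dim_K (S/I)_i` of the quotient by a (homogeneous) ideal `I`,
for the standard grading by total degree. -/
noncomputable def hilbFun (K : Type*) [Field K] {m n : ℕ}
    (I : Ideal (MvPolynomial (Fin m × Fin n) K)) (i : ℕ) : ℕ :=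
  Module.finrank K (homogeneousSubmodule (Fin m × Fin n) K i) -
    Module.finrank K
      (Submodule.restrictScalars K I ⊓ homogeneousSubmodule (Fin m × Fin n) K i :
        Submodule K (MvPolynomial (Fin m × Fin n) K))

/-- `P` is the Hilbert–Poincaré polynomial of `S/I`:  the Hilbert series of `S/I` equals
`P(z)/(1-z)^d` where `d` is the Krull dimension of `S/I`. -/
noncomputable def IsHilbNum (K : Type*) [Field K] {m n : ℕ}
    (I : Ideal (MvPolynomial (Fin m × Fin n) K)) (P : Polynomial ℤ) : Prop :=
  ∃ d : ℕ, ringKrullDim (MvPolynomial (Fin m × Fin n) K ⧸ I) = (d : WithBot ℕ∞) ∧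
    (PowerSeries.mk fun i => (hilbFun K I i : ℤ)) * (1 - PowerSeries.X) ^ d =
      PowerSeries.mk fun i => P.coeff i

/-- `I(C)` for `C` the set of all corner-interval minors:
`(x_{a,1}x_{b,k} − x_{b,1}x_{a,k} : 1 ≤ a < b ≤ m, 2 ≤ k ≤ n)` (here `0`-indexed). -/
noncomputable def cornerIntervalIdealAll (K : Type*) [Field K] (m n : ℕ) [NeZero n] :
    Ideal (MvPolynomial (Fin m × Fin n) K) :=
  Ideal.span {f | ∃ (a b : Fin m) (k : Fin n), a < b ∧ k ≠ 0 ∧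
    f = X (a, (0 : Fin n)) * X (b, k) - X (b, (0 : Fin n)) * X (a, k)}

/-- The determinantal ideal `I₂(M)` generated by all 2-minors of `M`. -/
noncomputable def detIdeal2 (K : Type*) [Field K] (m n : ℕ) :
    Ideal (MvPolynomial (Fin m × Fin n) K) :=
  Ideal.span {f | ∃ (a b : Fin m) (c d : Fin n), a < b ∧ c < d ∧
    f = X (a, c) * X (b, d) - X (a, d) * X (b, c)}

/-- The ideal `I₂(M_{t+1,1})` generated by all 2-minors of the submatrix with
(0-indexed) rows `≥ t`, viewed inside the full polynomial ring `S`. -/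
noncomputable def detIdeal2From (K : Type*) [Field K] (m n : ℕ) (t : ℕ) :
    Ideal (MvPolynomial (Fin m × Fin n) K) :=
  Ideal.span {f | ∃ (a b : Fin m) (c d : Fin n), a < b ∧ c < d ∧ t ≤ a.val ∧
    f = X (a, c) * X (b, d) - X (a, d) * X (b, c)}

/-- The ideal `I₂(M_{2,2})` generated by the 2-minors not involving the first row
nor the first column, viewed inside the full polynomial ring `S`. -/
noncomputable def detIdeal2_22 (K : Type*) [Field K] (m n : ℕ) [NeZero m] [NeZero n] :
    Ideal (MvPolynomial (Fin m × Fin n) K) :=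
  Ideal.span {f | ∃ (a b : Fin m) (c d : Fin n), a < b ∧ c < d ∧ a ≠ 0 ∧ c ≠ 0 ∧
    f = X (a, c) * X (b, d) - X (a, d) * X (b, c)}

/-- `I(C)` for `C` the set of all corner minors:
`(x₁₁x_{ij} − x_{1j}x_{i1} : 2 ≤ i ≤ m, 2 ≤ j ≤ n)` (here `0`-indexed). -/
noncomputable def cornerIdealAll (K : Type*) [Field K] (m n : ℕ) [NeZero m] [NeZero n] :
    Ideal (MvPolynomial (Fin m × Fin n) K) :=
  Ideal.span {f | ∃ (i : Fin m) (j : Fin n), i ≠ 0 ∧ j ≠ 0 ∧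
    f = X ((0 : Fin m), (0 : Fin n)) * X (i, j) - X ((0 : Fin m), j) * X (i, (0 : Fin n))}

/-- The ideal `H = (x₁₁, …, x_{1n})` generated by the variables of the first row. -/
noncomputable def rowIdeal (K : Type*) [Field K] (m n : ℕ) [NeZero m] :
    Ideal (MvPolynomial (Fin m × Fin n) K) :=
  Ideal.span {f | ∃ j : Fin n, f = X ((0 : Fin m), j)}

/-- The ideal `V = (x₁₁, x₂₁, …, x_{m1})` generated by the variables of the first column. -/
noncomputable def colIdeal (K : Type*) [Field K] (m n : ℕ) [NeZero n] :
    Ideal (MvPolynomial (Fin m × Fin n) K) :=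
  Ideal.span {f | ∃ i : Fin m, f = X (i, (0 : Fin n))}

/-!
Kill the variables in a set `s` by a ring endomorphism `φ`. An element `y` of an ideal `B` generated
by polynomials in the other variables satisfies `y - φ y ∈ B · (s)`, so `B ∩ (s) = B · (s)`. By the
modular law, `(A + B) ∩ (s) = A + B · (s)` whenever `A ⊆ (s)`.

Let `C`, `D_H`, `D_V`, `N` be the ideals of the 2-minors that use both the first row and the first
column, only the first row, only the first column, or neither, and let `H' = (x₁₂, …, x_{1n})`.
Intersecting `I₂(M) = (C + D_H) + (D_V + N)` with `H` in this way gives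
`(C + D_V · H + x₁₁ · N) + (D_H + N · H')`, and intersecting this with `V` gives
`I₂(M) ∩ H ∩ V = C + D_V · H + x₁₁ · N + D_H · V + N · H' · V`.
Modulo `C` a product `x_{1j} x_{i1}` may be replaced by `x₁₁ x_{ij}`, which brings every summand
into `C + x₁₁ · I₂(M)`; and every minor that meets the first row or column lies in `C` once
multiplied by `x₁₁`.
-/

section Retraction

variable {S : Type*} [CommRing S]

lemma span_inf_eq_mul_of_fixed {I : Ideal S} {G : Set S} (φ : S →+* S)
    (hI : I ≤ RingHom.ker φ) (hφ : ∀ x, x - φ x ∈ I) (hG : ∀ g ∈ G, φ g = g) :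
    Ideal.span G ⊓ I = Ideal.span G * I := by
  refine le_antisymm ?_ Ideal.mul_le_inf
  have sub_mem_mul : ∀ y ∈ Ideal.span G, y - φ y ∈ Ideal.span G * I := by
    intro y hy
    induction hy using Submodule.span_induction with
    | mem g hg => simp only [hG g hg, sub_self, zero_mem]
    | zero => simp only [map_zero, sub_self, zero_mem]
    | add y z _ _ hy hz =>
      rw [map_add, add_sub_add_comm]
      exact add_mem hy hz
    | smul a y hy ih =>
      have split : a • y - φ (a • y) = φ a * (y - φ y) + y * (a - φ a) := by
        rw [smul_eq_mul, map_mul]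
        ring
      rw [split]
      exact add_mem (Ideal.mul_mem_left _ _ ih) (Ideal.mul_mem_mul hy (hφ a))
  rintro y ⟨hy, hyI⟩
  simpa only [(RingHom.mem_ker).1 (hI hyI), sub_zero] using sub_mem_mul y hy

end Retraction

section Variables

open Set Pointwise

variable {σ R : Type*} [CommRing R]

open Classical in
/-- The endomorphism of the polynomial ring that sends the variables in `s` to `0` and fixes the
others. -/
noncomputable def killVars (s : Set σ) : MvPolynomial σ R →ₐ[R] MvPolynomial σ R :=
  aeval fun p => if p ∈ s then 0 else X p

lemma killVars_X_of_mem {s : Set σ} {p : σ} (hp : p ∈ s) :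
    killVars s (X p : MvPolynomial σ R) = 0 := by
  rw [killVars, aeval_X, if_pos hp]

lemma killVars_X_of_notMem {s : Set σ} {p : σ} (hp : p ∉ s) :
    killVars s (X p : MvPolynomial σ R) = X p := by
  rw [killVars, aeval_X, if_neg hp]

lemma killVars_eq_self_of_mem_supported {s t : Set σ} (hst : Disjoint s t)
    {f : MvPolynomial σ R} (hf : f ∈ supported R t) : killVars s f = f := by
  have fixed : supported R t ≤ AlgHom.equalizer (killVars s) (AlgHom.id R _) := by
    refine Algebra.adjoin_le ?_
    rintro _ ⟨p, hp, rfl⟩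
    exact killVars_X_of_notMem (hst.notMem_of_mem_right hp)
  exact fixed hf

lemma span_X_image_le_ker_killVars (s : Set σ) :
    Ideal.span (X '' s) ≤ RingHom.ker (killVars s : MvPolynomial σ R →ₐ[R] _).toRingHom := by
  refine Ideal.span_le.2 ?_
  rintro _ ⟨p, hp, rfl⟩
  exact killVars_X_of_mem hp

lemma sub_killVars_mem_span_X_image (s : Set σ) (f : MvPolynomial σ R) :
    f - killVars s f ∈ Ideal.span (X '' s) := by
  let π := Ideal.Quotient.mkₐ R (Ideal.span (X '' s : Set (MvPolynomial σ R)))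
  have eq_mod : π = π.comp (killVars s) := by
    ext p
    by_cases hp : p ∈ s
    · rw [AlgHom.comp_apply, killVars_X_of_mem hp, map_zero]
      exact Ideal.Quotient.eq_zero_iff_mem.2 (Ideal.subset_span (mem_image_of_mem X hp))
    · rw [AlgHom.comp_apply, killVars_X_of_notMem hp]
  exact Ideal.Quotient.eq.1 (DFunLike.congr_fun eq_mod f)

/-- The ideal `I` is generated by polynomials that involve only the variables in `t`, so
that intersecting it with an ideal of other variables amounts to multiplying by that ideal. -/
def IsGeneratedIn (t : Set σ) (I : Ideal (MvPolynomial σ R)) : Prop :=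
  ∃ G ⊆ (supported R t : Set (MvPolynomial σ R)), Ideal.span G = I

namespace IsGeneratedIn

variable {s t : Set σ} {I J : Ideal (MvPolynomial σ R)}

lemma span_X_image (hst : s ⊆ t) : IsGeneratedIn t (Ideal.span (X '' s : Set (MvPolynomial σ R))) :=
  ⟨_, (image_mono hst).trans Algebra.subset_adjoin, rfl⟩

lemma sup (hI : IsGeneratedIn t I) (hJ : IsGeneratedIn t J) : IsGeneratedIn t (I ⊔ J) := by
  obtain ⟨G, hG, rfl⟩ := hI
  obtain ⟨G', hG', rfl⟩ := hJ
  exact ⟨G ∪ G', union_subset hG hG', Ideal.span_union G G'⟩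

lemma mul (hI : IsGeneratedIn t I) (hJ : IsGeneratedIn t J) : IsGeneratedIn t (I * J) := by
  obtain ⟨G, hG, rfl⟩ := hI
  obtain ⟨G', hG', rfl⟩ := hJ
  exact ⟨G * G', mul_subset_iff.2 fun _ hg _ hg' => mul_mem (hG hg) (hG' hg'),
    (Ideal.span_mul_span' G G').symm⟩

lemma inf_span_X_image (hI : IsGeneratedIn t I) (hst : Disjoint s t) :
    I ⊓ Ideal.span (X '' s) = I * Ideal.span (X '' s) := by
  obtain ⟨G, hG, rfl⟩ := hI
  exact span_inf_eq_mul_of_fixed (killVars s).toRingHom (span_X_image_le_ker_killVars s)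
    (sub_killVars_mem_span_X_image s)
    fun _ hg => killVars_eq_self_of_mem_supported hst (hG hg)

end IsGeneratedIn

end Variables

section Minors

open Set Pointwise

variable {ι κ : Type*} (R : Type*) [CommRing R]

/-- The 2-minor `[a, b | c, d]` of the generic matrix with rows `ι` and columns `κ`. The rows and
columns need not be ordered or distinct, so that every minor occurs with both signs. -/
noncomputable def twoMinor (a b : ι) (c d : κ) : MvPolynomial (ι × κ) R :=
  X (a, c) * X (b, d) - X (a, d) * X (b, c)

/-- The ideal generated by the 2-minors of the generic matrix with first row in `A`, second row in
`A'`, first column in `B` and second column in `B'`. Thus `I₂(M)` has all four sets equal to `univ`,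
and the corner minors at the entry `(i₀, j₀)` generate `minorIdeal R {i₀} univ {j₀} univ`. -/
noncomputable def minorIdeal (A A' : Set ι) (B B' : Set κ) : Ideal (MvPolynomial (ι × κ) R) :=
  Ideal.span {f | ∃ a ∈ A, ∃ b ∈ A', ∃ c ∈ B, ∃ d ∈ B', f = twoMinor R a b c d}

/-- The ideal generated by the variables in the rows `A` and columns `B` of the generic matrix. -/
noncomputable def entryIdeal (A : Set ι) (B : Set κ) : Ideal (MvPolynomial (ι × κ) R) :=
  Ideal.span (X '' (A ×ˢ B))

variable {R} {A A' A₁ : Set ι} {B B' B₁ : Set κ}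

lemma twoMinor_swap_rows (a b : ι) (c d : κ) : twoMinor R b a c d = -twoMinor R a b c d := by
  simp only [twoMinor]
  ring

lemma twoMinor_swap_cols (a b : ι) (c d : κ) : twoMinor R a b d c = -twoMinor R a b c d := by
  simp only [twoMinor]
  ring

lemma twoMinor_self_row (a : ι) (c d : κ) : twoMinor R a a c d = 0 := by
  simp only [twoMinor]
  ring

lemma twoMinor_self_col (a b : ι) (c : κ) : twoMinor R a b c c = 0 :=
  sub_self _

lemma twoMinor_mem_minorIdeal {a b : ι} {c d : κ} (ha : a ∈ A) (hb : b ∈ A') (hc : c ∈ B)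
    (hd : d ∈ B') : twoMinor R a b c d ∈ minorIdeal R A A' B B' :=
  Ideal.subset_span ⟨a, ha, b, hb, c, hc, d, hd, rfl⟩

lemma minorIdeal_le {I : Ideal (MvPolynomial (ι × κ) R)}
    (h : ∀ a ∈ A, ∀ b ∈ A', ∀ c ∈ B, ∀ d ∈ B', twoMinor R a b c d ∈ I) :
    minorIdeal R A A' B B' ≤ I := by
  refine Ideal.span_le.2 ?_
  rintro _ ⟨a, ha, b, hb, c, hc, d, hd, rfl⟩
  exact h a ha b hb c hc d hd

lemma minorIdeal_mono {A₁' : Set ι} {B₁' : Set κ} (hA : A ⊆ A₁) (hA' : A' ⊆ A₁') (hB : B ⊆ B₁)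
    (hB' : B' ⊆ B₁') : minorIdeal R A A' B B' ≤ minorIdeal R A₁ A₁' B₁ B₁' :=
  minorIdeal_le fun _ ha _ hb _ hc _ hd =>
    twoMinor_mem_minorIdeal (hA ha) (hA' hb) (hB hc) (hB' hd)

lemma minorIdeal_le_of_lt [LinearOrder ι] [LinearOrder κ] {I : Ideal (MvPolynomial (ι × κ) R)}
    (h : ∀ a ∈ A, ∀ b ∈ A, ∀ c ∈ B, ∀ d ∈ B, a < b → c < d → twoMinor R a b c d ∈ I) :
    minorIdeal R A A B B ≤ I := by
  have of_lt_rows : ∀ a ∈ A, ∀ b ∈ A, ∀ c ∈ B, ∀ d ∈ B, a < b → twoMinor R a b c d ∈ I := by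
    intro a ha b hb c hc d hd hab
    rcases lt_trichotomy c d with hcd | rfl | hdc
    · exact h a ha b hb c hc d hd hab hcd
    · exact twoMinor_self_col (R := R) a b c ▸ zero_mem I
    · exact twoMinor_swap_cols (R := R) a b d c ▸ neg_mem (h a ha b hb d hd c hc hab hdc)
  refine minorIdeal_le fun a ha b hb c hc d hd => ?_
  rcases lt_trichotomy a b with hab | rfl | hba
  · exact of_lt_rows a ha b hb c hc d hd hab
  · exact twoMinor_self_row (R := R) a c d ▸ zero_mem I
  · exact twoMinor_swap_rows (R := R) b a c d ▸ neg_mem (of_lt_rows b hb a ha c hc d hd hba)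

lemma minorIdeal_univ_rows_eq_sup (i₀ : ι) (B B' : Set κ) :
    minorIdeal R univ univ B B' =
      minorIdeal R {i₀} univ B B' ⊔ minorIdeal R {i₀}ᶜ {i₀}ᶜ B B' := by
  refine le_antisymm (minorIdeal_le fun a _ b _ c hc d hd => ?_)
    (sup_le (minorIdeal_mono (subset_univ _) subset_rfl subset_rfl subset_rfl)
      (minorIdeal_mono (subset_univ _) (subset_univ _) subset_rfl subset_rfl))
  by_cases ha : a = i₀
  · exact Ideal.mem_sup_left (twoMinor_mem_minorIdeal ha (mem_univ b) hc hd)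
  by_cases hb : b = i₀
  · rw [twoMinor_swap_rows]
    exact Ideal.mem_sup_left (neg_mem (twoMinor_mem_minorIdeal hb (mem_univ a) hc hd))
  · exact Ideal.mem_sup_right (twoMinor_mem_minorIdeal ha hb hc hd)

lemma minorIdeal_univ_cols_eq_sup (A A' : Set ι) (j₀ : κ) :
    minorIdeal R A A' univ univ =
      minorIdeal R A A' {j₀} univ ⊔ minorIdeal R A A' {j₀}ᶜ {j₀}ᶜ := by
  refine le_antisymm (minorIdeal_le fun a ha b hb c _ d _ => ?_)
    (sup_le (minorIdeal_mono subset_rfl subset_rfl (subset_univ _) subset_rfl)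
      (minorIdeal_mono subset_rfl subset_rfl (subset_univ _) (subset_univ _)))
  by_cases hc : c = j₀
  · exact Ideal.mem_sup_left (twoMinor_mem_minorIdeal ha hb hc (mem_univ d))
  by_cases hd : d = j₀
  · rw [twoMinor_swap_cols]
    exact Ideal.mem_sup_left (neg_mem (twoMinor_mem_minorIdeal ha hb hd (mem_univ c)))
  · exact Ideal.mem_sup_right (twoMinor_mem_minorIdeal ha hb hc hd)

lemma minorIdeal_isGeneratedIn (hA : A ⊆ A₁) (hA' : A' ⊆ A₁) (hB : B ⊆ B₁) (hB' : B' ⊆ B₁) :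
    IsGeneratedIn (A₁ ×ˢ B₁) (minorIdeal R A A' B B') := by
  refine ⟨_, ?_, rfl⟩
  rintro _ ⟨a, ha, b, hb, c, hc, d, hd, rfl⟩
  have X_mem {p : ι × κ} (hp : p ∈ A₁ ×ˢ B₁) : X p ∈ supported R (A₁ ×ˢ B₁) :=
    Algebra.subset_adjoin (mem_image_of_mem X hp)
  exact sub_mem (mul_mem (X_mem ⟨hA ha, hB hc⟩) (X_mem ⟨hA' hb, hB' hd⟩))
    (mul_mem (X_mem ⟨hA ha, hB' hd⟩) (X_mem ⟨hA' hb, hB hc⟩))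

lemma X_mem_entryIdeal {i : ι} {j : κ} (hi : i ∈ A) (hj : j ∈ B) :
    X (i, j) ∈ entryIdeal R A B :=
  Ideal.subset_span (mem_image_of_mem X ⟨hi, hj⟩)

lemma entryIdeal_singleton (i : ι) (j : κ) : entryIdeal R {i} {j} = Ideal.span {X (i, j)} := by
  rw [entryIdeal, singleton_prod_singleton, image_singleton]

lemma entryIdeal_mono (hA : A ⊆ A₁) (hB : B ⊆ B₁) : entryIdeal R A B ≤ entryIdeal R A₁ B₁ :=
  Ideal.span_mono (image_mono (prod_mono hA hB))

lemma entryIdeal_isGeneratedIn (hA : A ⊆ A₁) (hB : B ⊆ B₁) :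
    IsGeneratedIn (A₁ ×ˢ B₁) (entryIdeal R A B) :=
  IsGeneratedIn.span_X_image (prod_mono hA hB)

lemma entryIdeal_univ_cols_eq_sup (A : Set ι) (j₀ : κ) :
    entryIdeal R A univ = entryIdeal R A {j₀} ⊔ entryIdeal R A {j₀}ᶜ := by
  simp only [entryIdeal, ← Ideal.span_union, ← image_union, ← prod_union, union_compl_self]

lemma minorIdeal_le_entryIdeal_rows (A A' : Set ι) (B B' : Set κ) :
    minorIdeal R A A' B B' ≤ entryIdeal R A univ :=
  minorIdeal_le fun _ ha _ _ _ _ _ _ =>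
    sub_mem (Ideal.mul_mem_right _ _ (X_mem_entryIdeal ha (mem_univ _)))
      (Ideal.mul_mem_right _ _ (X_mem_entryIdeal ha (mem_univ _)))

lemma minorIdeal_le_entryIdeal_cols (A A' : Set ι) (B B' : Set κ) :
    minorIdeal R A A' B B' ≤ entryIdeal R univ B :=
  minorIdeal_le fun _ _ _ _ _ hc _ _ =>
    sub_mem (Ideal.mul_mem_right _ _ (X_mem_entryIdeal (mem_univ _) hc))
      (Ideal.mul_mem_left _ _ (X_mem_entryIdeal (mem_univ _) hc))

lemma IsGeneratedIn.sup_inf_entryIdeal {t : Set (ι × κ)} {I J : Ideal (MvPolynomial (ι × κ) R)}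
    (hI : IsGeneratedIn t I) (ht : Disjoint (A ×ˢ B) t) (hJ : J ≤ entryIdeal R A B) :
    (J ⊔ I) ⊓ entryIdeal R A B = J ⊔ I * entryIdeal R A B := by
  rw [sup_inf_assoc_of_le I hJ, entryIdeal, hI.inf_span_X_image ht]

lemma entryIdeal_mul_minorIdeal_le {I : Ideal (MvPolynomial (ι × κ) R)}
    (h : ∀ i ∈ A₁, ∀ j ∈ B₁, ∀ a ∈ A, ∀ b ∈ A', ∀ c ∈ B, ∀ d ∈ B',
      X (i, j) * twoMinor R a b c d ∈ I) :
    entryIdeal R A₁ B₁ * minorIdeal R A A' B B' ≤ I := by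
  refine (Ideal.span_mul_span' _ _).trans_le (Ideal.span_le.2 (mul_subset_iff.2 ?_))
  rintro _ ⟨⟨i, j⟩, ⟨hi, hj⟩, rfl⟩ _ ⟨a, ha, b, hb, c, hc, d, hd, rfl⟩
  exact h i hi j hj a ha b hb c hc d hd

end Minors

section Corner

open Set Pointwise

variable {ι κ : Type*} {R : Type*} [CommRing R] (i₀ : ι) (j₀ : κ)

lemma twoMinor_mem_corner (i : ι) (j : κ) :
    twoMinor R i₀ i j₀ j ∈ minorIdeal R {i₀} univ {j₀} univ :=
  twoMinor_mem_minorIdeal rfl (mem_univ i) rfl (mem_univ j)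

lemma entry_mul_rowMinors_le_corner (B B' : Set κ) :
    entryIdeal R {i₀} {j₀} * minorIdeal R {i₀} univ B B' ≤
      minorIdeal R {i₀} univ {j₀} univ := by
  refine entryIdeal_mul_minorIdeal_le ?_
  rintro _ rfl j₀ rfl i₀ rfl b - c - d -
  have expand : X (i₀, j₀) * twoMinor R i₀ b c d =
      X (i₀, c) * twoMinor R i₀ b j₀ d - X (i₀, d) * twoMinor R i₀ b j₀ c := by
    simp only [twoMinor]
    ring
  rw [expand]
  exact sub_mem (Ideal.mul_mem_left _ _ (twoMinor_mem_corner i₀ j₀ b d))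
    (Ideal.mul_mem_left _ _ (twoMinor_mem_corner i₀ j₀ b c))

lemma entry_mul_colMinors_le_corner (A A' : Set ι) :
    entryIdeal R {i₀} {j₀} * minorIdeal R A A' {j₀} univ ≤
      minorIdeal R {i₀} univ {j₀} univ := by
  refine entryIdeal_mul_minorIdeal_le ?_
  rintro i₀ rfl _ rfl a - b - j₀ rfl d -
  have expand : X (i₀, j₀) * twoMinor R a b j₀ d =
      X (a, j₀) * twoMinor R i₀ b j₀ d - X (b, j₀) * twoMinor R i₀ a j₀ d := by
    simp only [twoMinor]
    ring
  rw [expand]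
  exact sub_mem (Ideal.mul_mem_left _ _ (twoMinor_mem_corner i₀ j₀ b d))
    (Ideal.mul_mem_left _ _ (twoMinor_mem_corner i₀ j₀ a d))

lemma corner_sup_entry_mul_minorIdeal_univ :
    minorIdeal R {i₀} univ {j₀} univ ⊔ entryIdeal R {i₀} {j₀} * minorIdeal R univ univ univ univ =
      minorIdeal R {i₀} univ {j₀} univ ⊔
        entryIdeal R {i₀} {j₀} * minorIdeal R {i₀}ᶜ {i₀}ᶜ {j₀}ᶜ {j₀}ᶜ := by
  rw [minorIdeal_univ_rows_eq_sup i₀, minorIdeal_univ_cols_eq_sup {i₀}ᶜ {i₀}ᶜ j₀, Ideal.mul_sup,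
    Ideal.mul_sup, ← sup_assoc, ← sup_assoc,
    sup_eq_left.2 (entry_mul_rowMinors_le_corner i₀ j₀ univ univ),
    sup_eq_left.2 (entry_mul_colMinors_le_corner i₀ j₀ {i₀}ᶜ {i₀}ᶜ)]

lemma row_mul_col_le :
    entryIdeal R {i₀} univ * entryIdeal R univ {j₀} ≤
      minorIdeal R {i₀} univ {j₀} univ ⊔ entryIdeal R {i₀} {j₀} := by
  refine (Ideal.span_mul_span' _ _).trans_le (Ideal.span_le.2 (mul_subset_iff.2 ?_))
  rintro _ ⟨⟨i₀, j⟩, ⟨rfl, -⟩, rfl⟩ _ ⟨⟨i, j₀⟩, ⟨-, rfl⟩, rfl⟩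
  have exchange : (X (i₀, j) * X (i, j₀) : MvPolynomial (ι × κ) R) =
      -twoMinor R i₀ i j₀ j + X (i₀, j₀) * X (i, j) := by
    simp only [twoMinor]
    ring
  rw [exchange]
  exact add_mem (Ideal.mem_sup_left (neg_mem (twoMinor_mem_corner i₀ j₀ i j)))
    (Ideal.mem_sup_right (Ideal.mul_mem_right _ _ (X_mem_entryIdeal rfl rfl)))

lemma row_mul_col_mul_minorIdeal_le (A A' : Set ι) (B B' : Set κ) :
    entryIdeal R {i₀} univ * entryIdeal R univ {j₀} * minorIdeal R A A' B B' ≤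
      minorIdeal R {i₀} univ {j₀} univ ⊔ entryIdeal R {i₀} {j₀} * minorIdeal R A A' B B' := by
  refine (Ideal.mul_mono_left (row_mul_col_le i₀ j₀)).trans ?_
  rw [Ideal.sup_mul]
  exact sup_le_sup_right Ideal.mul_le_left _

lemma row_mul_colMinors_le (A A' : Set ι) :
    entryIdeal R {i₀} univ * minorIdeal R A A' {j₀} univ ≤
      minorIdeal R {i₀} univ {j₀} univ ⊔
        entryIdeal R {i₀} {j₀} * minorIdeal R univ univ univ univ := by
  refine entryIdeal_mul_minorIdeal_le ?_
  rintro i₀ rfl j - a - b - j₀ rfl d -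
  have exchange : X (i₀, j) * twoMinor R a b j₀ d =
      X (a, d) * twoMinor R i₀ b j₀ j - X (b, d) * twoMinor R i₀ a j₀ j +
        X (i₀, j₀) * twoMinor R a b j d := by
    simp only [twoMinor]
    ring
  rw [exchange]
  exact add_mem (Ideal.mem_sup_left (sub_mem
      (Ideal.mul_mem_left _ _ (twoMinor_mem_corner i₀ j₀ b j))
      (Ideal.mul_mem_left _ _ (twoMinor_mem_corner i₀ j₀ a j))))
    (Ideal.mem_sup_right (Ideal.mul_mem_mul (X_mem_entryIdeal rfl rfl)
      (twoMinor_mem_minorIdeal (mem_univ a) (mem_univ b) (mem_univ j) (mem_univ d))))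

lemma col_mul_rowMinors_le (B B' : Set κ) :
    entryIdeal R univ {j₀} * minorIdeal R {i₀} univ B B' ≤
      minorIdeal R {i₀} univ {j₀} univ ⊔
        entryIdeal R {i₀} {j₀} * minorIdeal R univ univ univ univ := by
  refine entryIdeal_mul_minorIdeal_le ?_
  rintro i - j₀ rfl i₀ rfl b - c - d -
  have exchange : X (i, j₀) * twoMinor R i₀ b c d =
      X (b, c) * twoMinor R i₀ i j₀ d - X (b, d) * twoMinor R i₀ i j₀ c +
        X (i₀, j₀) * twoMinor R i b c d := by
    simp only [twoMinor]
    ring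
  rw [exchange]
  exact add_mem (Ideal.mem_sup_left (sub_mem
      (Ideal.mul_mem_left _ _ (twoMinor_mem_corner i₀ j₀ i d))
      (Ideal.mul_mem_left _ _ (twoMinor_mem_corner i₀ j₀ i c))))
    (Ideal.mem_sup_right (Ideal.mul_mem_mul (X_mem_entryIdeal rfl rfl)
      (twoMinor_mem_minorIdeal (mem_univ i) (mem_univ b) (mem_univ c) (mem_univ d))))

lemma minorIdeal_inf_row :
    minorIdeal R univ univ univ univ ⊓ entryIdeal R {i₀} (univ : Set κ) =
      minorIdeal R {i₀} univ univ univ ⊔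
        minorIdeal R {i₀}ᶜ {i₀}ᶜ univ univ * entryIdeal R {i₀} univ := by
  rw [minorIdeal_univ_rows_eq_sup i₀]
  exact (minorIdeal_isGeneratedIn subset_rfl subset_rfl subset_rfl subset_rfl).sup_inf_entryIdeal
    (disjoint_compl_right.set_prod_left _ _) (minorIdeal_le_entryIdeal_rows _ _ _ _)

lemma minorIdeal_inf_row_eq_sup_cols :
    minorIdeal R univ univ univ univ ⊓ entryIdeal R {i₀} univ =
      (minorIdeal R {i₀} univ {j₀} univ ⊔
        minorIdeal R {i₀}ᶜ {i₀}ᶜ {j₀} univ * entryIdeal R {i₀} univ ⊔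
        minorIdeal R {i₀}ᶜ {i₀}ᶜ {j₀}ᶜ {j₀}ᶜ * entryIdeal R {i₀} {j₀}) ⊔
      (minorIdeal R {i₀} univ {j₀}ᶜ {j₀}ᶜ ⊔
        minorIdeal R {i₀}ᶜ {i₀}ᶜ {j₀}ᶜ {j₀}ᶜ * entryIdeal R {i₀} {j₀}ᶜ) := by
  rw [minorIdeal_inf_row, minorIdeal_univ_cols_eq_sup {i₀} univ j₀,
    minorIdeal_univ_cols_eq_sup {i₀}ᶜ {i₀}ᶜ j₀, Ideal.sup_mul, sup_sup_sup_comm,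
    sup_assoc (minorIdeal R {i₀} univ {j₀} univ ⊔ _), sup_left_comm (minorIdeal R _ _ _ _ * _),
    ← Ideal.mul_sup, ← entryIdeal_univ_cols_eq_sup]

lemma minorIdeal_inf_row_inf_col :
    minorIdeal R univ univ univ univ ⊓ entryIdeal R {i₀} univ ⊓ entryIdeal R univ {j₀} =
      (minorIdeal R {i₀} univ {j₀} univ ⊔
        minorIdeal R {i₀}ᶜ {i₀}ᶜ {j₀} univ * entryIdeal R {i₀} univ ⊔
        minorIdeal R {i₀}ᶜ {i₀}ᶜ {j₀}ᶜ {j₀}ᶜ * entryIdeal R {i₀} {j₀}) ⊔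
      (minorIdeal R {i₀} univ {j₀}ᶜ {j₀}ᶜ ⊔
        minorIdeal R {i₀}ᶜ {i₀}ᶜ {j₀}ᶜ {j₀}ᶜ * entryIdeal R {i₀} {j₀}ᶜ) *
          entryIdeal R univ {j₀} := by
  have minors_off_col (A A' : Set ι) :
      IsGeneratedIn (univ ×ˢ {j₀}ᶜ) (minorIdeal R A A' {j₀}ᶜ {j₀}ᶜ) :=
    minorIdeal_isGeneratedIn (subset_univ _) (subset_univ _) subset_rfl subset_rfl
  have entries_off_col : IsGeneratedIn (univ ×ˢ {j₀}ᶜ) (entryIdeal R {i₀} {j₀}ᶜ) :=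
    entryIdeal_isGeneratedIn (subset_univ _) subset_rfl
  have minors_le_col (A A' : Set ι) : minorIdeal R A A' {j₀} univ ≤ entryIdeal R univ {j₀} :=
    minorIdeal_le_entryIdeal_cols A A' {j₀} univ
  have entry_le_col : entryIdeal R {i₀} {j₀} ≤ entryIdeal R univ {j₀} :=
    entryIdeal_mono (subset_univ _) subset_rfl
  rw [minorIdeal_inf_row_eq_sup_cols i₀ j₀]
  exact ((minors_off_col _ _).sup ((minors_off_col _ _).mul entries_off_col)).sup_inf_entryIdeal
    (disjoint_compl_right.set_prod_right _ _)
    (sup_le (sup_le (minors_le_col _ _) (Ideal.mul_le_left.trans (minors_le_col _ _)))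
      (Ideal.mul_le_right.trans entry_le_col))

end Corner

open Set in
theorem statement17_general {ι κ R : Type*} [CommRing R] (i₀ : ι) (j₀ : κ) :
    minorIdeal R univ univ univ univ ⊓ entryIdeal R {i₀} univ ⊓ entryIdeal R univ {j₀} =
      minorIdeal R {i₀} univ {j₀} univ +
        entryIdeal R {i₀} {j₀} * minorIdeal R {i₀}ᶜ {i₀}ᶜ {j₀}ᶜ {j₀}ᶜ := by
  have minorIdeal_le_row_mul_col : minorIdeal R {i₀}ᶜ {i₀}ᶜ {j₀}ᶜ {j₀}ᶜ *
      entryIdeal R {i₀} {j₀}ᶜ * entryIdeal R univ {j₀} ≤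
        entryIdeal R {i₀} univ * entryIdeal R univ {j₀} *
          minorIdeal R {i₀}ᶜ {i₀}ᶜ {j₀}ᶜ {j₀}ᶜ := by
    rw [mul_assoc, mul_comm]
    exact Ideal.mul_mono_left (Ideal.mul_mono_left (entryIdeal_mono subset_rfl (subset_univ _)))
  rw [Submodule.add_eq_sup, minorIdeal_inf_row_inf_col, Ideal.sup_mul,
    mul_comm (minorIdeal R {i₀}ᶜ {i₀}ᶜ {j₀} univ),
    mul_comm (minorIdeal R {i₀}ᶜ {i₀}ᶜ {j₀}ᶜ {j₀}ᶜ) (entryIdeal R {i₀} {j₀}),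
    mul_comm (minorIdeal R {i₀} univ {j₀}ᶜ {j₀}ᶜ)]
  refine le_antisymm (sup_le (sup_le (sup_le le_sup_left ?_) le_sup_right) (sup_le ?_ ?_))
    (le_sup_of_le_left (sup_le_sup_right le_sup_left _))
  · rw [← corner_sup_entry_mul_minorIdeal_univ]
    exact row_mul_colMinors_le i₀ j₀ _ _
  · rw [← corner_sup_entry_mul_minorIdeal_univ]
    exact col_mul_rowMinors_le i₀ j₀ _ _
  · exact minorIdeal_le_row_mul_col.trans (row_mul_col_mul_minorIdeal_le i₀ j₀ _ _ _ _)

section FinMatrix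

open Set

variable (K : Type*) [Field K] (m n : ℕ)

lemma detIdeal2_eq_minorIdeal : detIdeal2 K m n = minorIdeal K univ univ univ univ := by
  refine le_antisymm (Ideal.span_le.2 ?_)
    (minorIdeal_le_of_lt fun a _ b _ c _ d _ hab hcd =>
      Ideal.subset_span ⟨a, b, c, d, hab, hcd, rfl⟩)
  rintro _ ⟨a, b, c, d, -, -, rfl⟩
  exact twoMinor_mem_minorIdeal (mem_univ a) (mem_univ b) (mem_univ c) (mem_univ d)

lemma detIdeal2_22_eq_minorIdeal [NeZero m] [NeZero n] :
    detIdeal2_22 K m n = minorIdeal K {0}ᶜ {0}ᶜ {0}ᶜ {0}ᶜ := by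
  refine le_antisymm (Ideal.span_le.2 ?_)
    (minorIdeal_le_of_lt fun a ha b _ c hc d _ hab hcd =>
      Ideal.subset_span ⟨a, b, c, d, hab, hcd, ha, hc, rfl⟩)
  rintro _ ⟨a, b, c, d, hab, hcd, ha, hc, rfl⟩
  have ne_zero_of_lt {k : ℕ} [NeZero k] {x y : Fin k} (h : x < y) : y ≠ 0 :=
    ((Fin.zero_le x).trans_lt h).ne'
  exact twoMinor_mem_minorIdeal ha (ne_zero_of_lt hab) hc (ne_zero_of_lt hcd)

lemma cornerIdealAll_eq_minorIdeal [NeZero m] [NeZero n] :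
    cornerIdealAll K m n = minorIdeal K {0} univ {0} univ := by
  refine le_antisymm (Ideal.span_le.2 ?_) (minorIdeal_le ?_)
  · rintro _ ⟨i, j, -, -, rfl⟩
    exact twoMinor_mem_corner 0 0 i j
  · rintro _ rfl i - _ rfl j -
    rcases eq_or_ne i 0 with rfl | hi
    · exact twoMinor_self_row (R := K) (0 : Fin m) (0 : Fin n) j ▸ zero_mem _
    rcases eq_or_ne j 0 with rfl | hj
    · exact twoMinor_self_col (R := K) (0 : Fin m) i (0 : Fin n) ▸ zero_mem _
    exact Ideal.subset_span ⟨i, j, hi, hj, rfl⟩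

lemma rowIdeal_eq_entryIdeal [NeZero m] : rowIdeal K m n = entryIdeal K {0} univ := by
  refine congrArg Ideal.span (Set.ext fun f => ?_)
  simp [eq_comm]

lemma colIdeal_eq_entryIdeal [NeZero n] : colIdeal K m n = entryIdeal K univ {0} := by
  refine congrArg Ideal.span (Set.ext fun f => ?_)
  simp [eq_comm]

end FinMatrix

theorem statement17 (K : Type*) [Field K] (m n : ℕ) [NeZero m] [NeZero n]
    (hm : 2 < m) (hn : 2 < n) :
    detIdeal2 K m n ⊓ rowIdeal K m n ⊓ colIdeal K m n =
      cornerIdealAll K m n +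
        Ideal.span {(X ((0 : Fin m), (0 : Fin n)) : MvPolynomial (Fin m × Fin n) K)} *
          detIdeal2_22 K m n := by
  rw [detIdeal2_eq_minorIdeal, rowIdeal_eq_entryIdeal, colIdeal_eq_entryIdeal,
    cornerIdealAll_eq_minorIdeal, ← entryIdeal_singleton, detIdeal2_22_eq_minorIdeal]
  exact statement17_general 0 0
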